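/- arXiv:1102.5606 — 2 statements merged into one kernel-verified Lean document; each statement's English description precedes it below -/
import Mathlib

section
/- Let σ > 0, ρ ∈ (0,1), and let Z₁, Z₂ be independent standard Gaussian random variables; set X_s := σ Z₁ and X_t := σ(ρ Z₁ + √(1−ρ²) Z₂), so that (X_s, X_t) is a centred bivariate Gaussian vector with common variance σ² and correlation ρ. Let h : ℝ → ℝ be strictly increasing and continuous, satisfy condition [A₊] with parameter b₊ > 0, and satisfy h(−x)/h(x) → 0 as x → +∞. Then P(h(X_t) − h(X_s) > y) / P(h(X_t) > y) → 1 as y → ∞; in particular the right tail of the increment h(X_t) − h(X_s) is regularly varying at infinity with the same index −β₊ = −1/(2 b₊ σ²) as the right tail of h(X_t). -/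
open MeasureTheory ProbabilityTheory Filter Real Set

/-- The right tail of the standard Gaussian distribution. -/
noncomputable def stdGaussianTail (v : ℝ) : ℝ := (gaussianReal 0 1).real (Ioi v)

lemma stdGaussianTail_eq_integral (v : ℝ) :
    stdGaussianTail v = ∫ x in Ioi v, gaussianPDFReal 0 1 x := by
  rw [stdGaussianTail, Measure.real, gaussianReal_apply_eq_integral _ one_ne_zero,
    ENNReal.toReal_ofReal (integral_nonneg (gaussianPDFReal_nonneg _ _))]

lemma gaussianPDFReal_zero_one (x : ℝ) :
    gaussianPDFReal 0 1 x = (√(2 * π))⁻¹ * exp (-x ^ 2 / 2) := by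
  simp [gaussianPDFReal]

lemma hasDerivAt_gaussianPDFReal_zero_one (x : ℝ) :
    HasDerivAt (gaussianPDFReal 0 1) (-(x * gaussianPDFReal 0 1 x)) x := by
  rw [funext gaussianPDFReal_zero_one]
  have h : HasDerivAt (fun x : ℝ => -x ^ 2 / 2) (-x) x := by
    exact ((hasDerivAt_pow 2 x).fun_neg.div_const 2).congr_deriv (by norm_num [neg_div])
  exact (h.exp.const_mul (√(2 * π))⁻¹).congr_deriv (by ring)

lemma tendsto_gaussianPDFReal_zero_one_atTop :
    Tendsto (gaussianPDFReal 0 1) atTop (nhds 0) := by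
  rw [funext gaussianPDFReal_zero_one]
  have h : Tendsto (fun x : ℝ => -x ^ 2 / 2) atTop atBot := by
    have := ((tendsto_pow_atTop (α := ℝ) two_ne_zero).atTop_div_const two_pos)
    exact (tendsto_neg_atTop_atBot.comp this).congr fun x => (neg_div 2 (x ^ 2)).symm
  simpa using (tendsto_exp_atBot.comp h).const_mul (√(2 * π))⁻¹

lemma stdGaussianTail_mills_bounds {v : ℝ} (hv : 0 < v) :
    stdGaussianTail v ≤ gaussianPDFReal 0 1 v / v ∧
      gaussianPDFReal 0 1 v / v ≤ (1 + 1 / v ^ 2) * stdGaussianTail v := by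
  set φ := gaussianPDFReal 0 1
  have hφ : ∀ x, 0 ≤ φ x := gaussianPDFReal_nonneg 0 1
  have hderiv : ∀ x ∈ Ici v, HasDerivAt (fun x => -(φ x / x)) (φ x + φ x / x ^ 2) x := by
    intro x hx
    have hx0 : x ≠ 0 := (hv.trans_le hx).ne'
    refine ((hasDerivAt_gaussianPDFReal_zero_one x).fun_div
      (hasDerivAt_id' x) hx0).fun_neg.congr_deriv ?_
    simp only [φ]
    field_simp
    ring
  have hnonneg : ∀ x ∈ Ioi v, 0 ≤ φ x + φ x / x ^ 2 := fun x _ =>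
    add_nonneg (hφ x) (div_nonneg (hφ x) (sq_nonneg x))
  have hlim : Tendsto (fun x => -(φ x / x)) atTop (nhds 0) := by
    simpa using (tendsto_gaussianPDFReal_zero_one_atTop.div_atTop tendsto_id).neg
  have hint := integrableOn_Ioi_deriv_of_nonneg' hderiv hnonneg hlim
  have heq := integral_Ioi_of_hasDerivAt_of_nonneg' hderiv hnonneg hlim
  have hφint : IntegrableOn φ (Ioi v) := (integrable_gaussianPDFReal 0 1).integrableOn
  simp only [sub_neg_eq_add, zero_add] at heq
  rw [stdGaussianTail_eq_integral, ← heq, ← integral_const_mul]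
  refine ⟨setIntegral_mono_on hφint hint measurableSet_Ioi fun x _ => ?_,
    setIntegral_mono_on hint (hφint.const_mul _) measurableSet_Ioi fun x hx => ?_⟩
  · exact le_add_of_nonneg_right (div_nonneg (hφ x) (sq_nonneg x))
  · have : φ x / x ^ 2 ≤ φ x / v ^ 2 :=
      div_le_div_of_nonneg_left (hφ x) (by positivity) (pow_le_pow_left₀ hv.le hx.out.le 2)
    calc φ x + φ x / x ^ 2 ≤ φ x + φ x / v ^ 2 := by gcongr
      _ = (1 + 1 / v ^ 2) * φ x := by ring

lemma stdGaussianTail_pos {v : ℝ} (hv : 0 < v) : 0 < stdGaussianTail v := by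
  have h1 := (stdGaussianTail_mills_bounds hv).2
  have h2 : 0 < gaussianPDFReal 0 1 v / v := div_pos (gaussianPDFReal_pos 0 1 v one_ne_zero) hv
  exact pos_of_mul_pos_right (h2.trans_le h1) (by positivity)

/-- **Mills ratio**: the tail at `v` is asymptotic to the density at `v` divided by `v`. -/
lemma tendsto_stdGaussianTail_mills_ratio :
    Tendsto (fun v => stdGaussianTail v / (gaussianPDFReal 0 1 v / v)) atTop (nhds 1) := by
  have hlow : Tendsto (fun v : ℝ => (1 + 1 / v ^ 2)⁻¹) atTop (nhds 1) := by
    have : Tendsto (fun v : ℝ => 1 / v ^ 2) atTop (nhds 0) :=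
      tendsto_const_nhds.div_atTop (tendsto_pow_atTop two_ne_zero)
    simpa using (this.const_add 1).inv₀ (by norm_num)
  refine tendsto_of_tendsto_of_tendsto_of_le_of_le' hlow tendsto_const_nhds ?_ ?_ <;>
    filter_upwards [eventually_gt_atTop 0] with v hv <;>
    have hpos : 0 < gaussianPDFReal 0 1 v / v :=
      div_pos (gaussianPDFReal_pos 0 1 v one_ne_zero) hv
  · rw [le_div_iff₀ hpos, inv_mul_le_iff₀ (by positivity)]
    exact (stdGaussianTail_mills_bounds hv).2
  · rw [div_le_one hpos]
    exact (stdGaussianTail_mills_bounds hv).1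

/-- The ratio of two tails has the same limit as the ratio of the corresponding densities,
multiplied by `v / w`. -/
lemma tendsto_stdGaussianTail_div {α : Type*} {F : Filter α} {v w : α → ℝ} {k c : ℝ}
    (hv : Tendsto v F atTop) (hw : Tendsto w F atTop)
    (hk : Tendsto (fun a => v a / w a) F (nhds k))
    (hc : Tendsto (fun a => exp ((v a ^ 2 - w a ^ 2) / 2)) F (nhds c)) :
    Tendsto (fun a => stdGaussianTail (w a) / stdGaussianTail (v a)) F (nhds (k * c)) := by
  have h := ((tendsto_stdGaussianTail_mills_ratio.comp hw).div
    (tendsto_stdGaussianTail_mills_ratio.comp hv) one_ne_zero).mul (hk.mul hc)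
  rw [div_one, one_mul] at h
  refine h.congr' ?_
  filter_upwards [hv.eventually_gt_atTop 0, hw.eventually_gt_atTop 0] with a hva hwa
  have h1 := stdGaussianTail_pos hva
  have hexp : exp ((v a ^ 2 - w a ^ 2) / 2) = exp (-w a ^ 2 / 2) / exp (-v a ^ 2 / 2) := by
    rw [← exp_sub]
    congr 1
    ring
  have hpi : 0 < √(2 * π) := by positivity
  simp only [Function.comp, Pi.div_apply, gaussianPDFReal_zero_one, hexp]
  field_simp

lemma tendsto_stdGaussianTail_div_of_sub_mul {α : Type*} {F : Filter α} {v w : α → ℝ} {c : ℝ}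
    (hv : Tendsto v F atTop) (h : Tendsto (fun a => (w a - v a) * v a) F (nhds c)) :
    Tendsto (fun a => stdGaussianTail (w a) / stdGaussianTail (v a)) F (nhds (exp (-c))) := by
  have hsub : Tendsto (fun a => w a - v a) F (nhds 0) := by
    refine (h.div_atTop hv).congr' ?_
    filter_upwards [hv.eventually_gt_atTop 0] with a ha
    rw [mul_div_cancel_right₀ _ ha.ne']
  have hw : Tendsto w F atTop := by
    simpa using hsub.add_atTop hv
  have hk : Tendsto (fun a => v a / w a) F (nhds 1) := by
    have := (hsub.div_atTop hw).const_sub 1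
    rw [sub_zero] at this
    refine this.congr' ?_
    filter_upwards [hw.eventually_gt_atTop 0] with a ha
    field_simp
    ring
  have hc : Tendsto (fun a => exp ((v a ^ 2 - w a ^ 2) / 2)) F (nhds (exp (-c))) := by
    refine (continuous_exp.tendsto _).comp ?_
    have := (h.neg).sub ((hsub.mul hsub).div_const 2)
    simp only [mul_zero, zero_div, sub_zero] at this
    refine this.congr fun a => ?_
    ring
  simpa using tendsto_stdGaussianTail_div hv hw hk hc

lemma tendsto_stdGaussianTail_div_of_one_lt {α : Type*} {F : Filter α} {v w : α → ℝ} {k : ℝ}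
    (hk : 1 < k) (hv : Tendsto v F atTop) (h : Tendsto (fun a => w a / v a) F (nhds k)) :
    Tendsto (fun a => stdGaussianTail (w a) / stdGaussianTail (v a)) F (nhds 0) := by
  have hw : Tendsto w F atTop := by
    refine (h.pos_mul_atTop (zero_lt_one.trans hk) hv).congr' ?_
    filter_upwards [hv.eventually_gt_atTop 0] with a ha
    rw [div_mul_cancel₀ _ ha.ne']
  have hk' : Tendsto (fun a => v a / w a) F (nhds k⁻¹) := by
    simpa using h.inv₀ (zero_lt_one.trans hk).ne'
  have hc : Tendsto (fun a => exp ((v a ^ 2 - w a ^ 2) / 2)) F (nhds 0) := by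
    refine tendsto_exp_atBot.comp ?_
    have h2 : Tendsto (fun a => (1 - (w a / v a) ^ 2) / 2) F (nhds ((1 - k ^ 2) / 2)) :=
      ((h.pow 2).const_sub 1).div_const 2
    refine (h2.neg_mul_atTop (by nlinarith)
      ((tendsto_pow_atTop two_ne_zero).comp hv)).congr' ?_
    filter_upwards [hv.eventually_gt_atTop 0] with a ha
    simp only [Function.comp]
    field_simp
  simpa using tendsto_stdGaussianTail_div hv hw hk' hc

lemma gaussianReal_zero_one_map_const_mul (c : ℝ) :
    (gaussianReal 0 1).map (c * ·) = gaussianReal 0 (c ^ 2).toNNReal := by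
  rw [gaussianReal_map_const_mul]
  congr 1
  · simp
  · ext; simp [sq_nonneg]

lemma map_linear_combination_gaussianReal {Ω : Type*} [MeasurableSpace Ω] {μ : Measure Ω}
    {Z₁ Z₂ : Ω → ℝ} (hZ₁ : Measurable Z₁) (hZ₂ : Measurable Z₂)
    (hZ₁law : μ.map Z₁ = gaussianReal 0 1) (hZ₂law : μ.map Z₂ = gaussianReal 0 1)
    (hindep : IndepFun Z₁ Z₂ μ) (p q : ℝ) :
    μ.map (fun ω => p * Z₁ ω + q * Z₂ ω) = gaussianReal 0 (p ^ 2 + q ^ 2).toNNReal := by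
  have h1 : μ.map (fun ω => p * Z₁ ω) = gaussianReal 0 (p ^ 2).toNNReal := by
    rw [← gaussianReal_zero_one_map_const_mul, ← hZ₁law, Measure.map_map (by fun_prop) hZ₁]
    rfl
  have h2 : μ.map (fun ω => q * Z₂ ω) = gaussianReal 0 (q ^ 2).toNNReal := by
    rw [← gaussianReal_zero_one_map_const_mul, ← hZ₂law, Measure.map_map (by fun_prop) hZ₂]
    rfl
  have hi : IndepFun (fun ω => p * Z₁ ω) (fun ω => q * Z₂ ω) μ :=
    hindep.comp (φ := (p * ·)) (ψ := (q * ·)) (by fun_prop) (by fun_prop)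
  have h := gaussianReal_add_gaussianReal_of_indepFun hi h1 h2
  rw [← Real.toNNReal_add (sq_nonneg p) (sq_nonneg q), add_zero] at h
  exact h

lemma measureReal_lt_linear_combination {Ω : Type*} [MeasurableSpace Ω] {μ : Measure Ω}
    {Z₁ Z₂ : Ω → ℝ} (hZ₁ : Measurable Z₁) (hZ₂ : Measurable Z₂)
    (hZ₁law : μ.map Z₁ = gaussianReal 0 1) (hZ₂law : μ.map Z₂ = gaussianReal 0 1)
    (hindep : IndepFun Z₁ Z₂ μ) {p q s : ℝ} (hs : 0 < s) (hpq : p ^ 2 + q ^ 2 = s ^ 2) (v : ℝ) :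
    μ.real {ω | v < p * Z₁ ω + q * Z₂ ω} = stdGaussianTail (v / s) := by
  have hlaw := map_linear_combination_gaussianReal hZ₁ hZ₂ hZ₁law hZ₂law hindep p q
  have hL : μ.real {ω | v < p * Z₁ ω + q * Z₂ ω} =
      (μ.map (fun ω => p * Z₁ ω + q * Z₂ ω)).real (Ioi v) := by
    rw [map_measureReal_apply (by fun_prop) measurableSet_Ioi]
    rfl
  rw [hL, hlaw, hpq, ← gaussianReal_zero_one_map_const_mul,
    map_measureReal_apply (by fun_prop) measurableSet_Ioi, stdGaussianTail]
  congr 1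
  ext x
  simp [div_lt_iff₀ hs, mul_comm]

lemma exists_deriv_mul_sub_eq {F : ℝ → ℝ} (hF : Differentiable ℝ F) (u w : ℝ) :
    ∃ ξ ∈ uIcc u w, deriv F ξ * (w - u) = F w - F u := by
  rcases lt_trichotomy u w with h | rfl | h
  · obtain ⟨ξ, hξ, he⟩ := exists_deriv_eq_slope F h hF.continuous.continuousOn hF.differentiableOn
    refine ⟨ξ, Icc_subset_uIcc (Ioo_subset_Icc_self hξ), ?_⟩
    rw [he, div_mul_cancel₀ _ (sub_pos.2 h).ne']
  · exact ⟨u, by simp, by simp⟩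
  · obtain ⟨ξ, hξ, he⟩ := exists_deriv_eq_slope F h hF.continuous.continuousOn hF.differentiableOn
    refine ⟨ξ, Icc_subset_uIcc' (Ioo_subset_Icc_self hξ), ?_⟩
    rw [he, ← neg_sub u w, mul_neg, div_mul_cancel₀ _ (sub_pos.2 h).ne', neg_sub]

lemma tendsto_atTop_of_tendsto_deriv_div_id {F : ℝ → ℝ} {c : ℝ} (hc : 0 < c)
    (hF' : Tendsto (fun x => deriv F x / x) atTop (nhds c)) :
    Tendsto (deriv F) atTop atTop := by
  refine (hF'.pos_mul_atTop hc tendsto_id).congr' ?_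
  filter_upwards [eventually_gt_atTop 0] with x hx
  simp only [id]
  rw [div_mul_cancel₀ _ hx.ne']

lemma tendsto_atTop_of_tendsto_deriv_atTop {F : ℝ → ℝ} (hF : Differentiable ℝ F)
    (hF' : Tendsto (deriv F) atTop atTop) : Tendsto F atTop atTop := by
  obtain ⟨a, ha⟩ := eventually_atTop.1 (hF'.eventually_ge_atTop 1)
  have hlin : Tendsto (fun x => x - a + F a) atTop atTop :=
    tendsto_atTop_add_const_right _ _ (tendsto_atTop_add_const_right _ (-a) tendsto_id)
  refine tendsto_atTop_mono' atTop ?_ hlin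
  filter_upwards [eventually_ge_atTop a] with x hx
  have := (convex_Ici a).mul_sub_le_image_sub_of_le_deriv hF.continuous.continuousOn
    hF.differentiableOn (C := 1) (fun y hy => ha y (interior_subset hy)) a self_mem_Ici x hx hx
  linarith

/-- If `F' x ∼ c x` at infinity, then a convergent increment `F w - F u → d` forces
`(w - u) u → d / c`. -/
lemma tendsto_sub_mul_of_tendsto_sub {α : Type*} {l : Filter α} {F : ℝ → ℝ} {c d : ℝ}
    {u w : α → ℝ} (hF : Differentiable ℝ F) (hc : 0 < c)
    (hF' : Tendsto (fun x => deriv F x / x) atTop (nhds c))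
    (hu : Tendsto u l atTop) (hw : Tendsto w l atTop)
    (hd : Tendsto (fun a => F (w a) - F (u a)) l (nhds d)) :
    Tendsto (fun a => (w a - u a) * u a) l (nhds (d / c)) := by
  choose ξ hξmem hξ using fun a => exists_deriv_mul_sub_eq hF (u a) (w a)
  have hξtop : Tendsto ξ l atTop := by
    rw [tendsto_atTop]
    intro M
    filter_upwards [hu.eventually_ge_atTop M, hw.eventually_ge_atTop M] with a h1 h2
    exact (le_min h1 h2).trans (hξmem a).1
  have hderiv := (tendsto_atTop_of_tendsto_deriv_div_id hc hF').comp hξtop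
  have hsub : Tendsto (fun a => w a - u a) l (nhds 0) := by
    refine (hd.div_atTop hderiv).congr' ?_
    filter_upwards [hderiv.eventually_gt_atTop 0] with a ha
    rw [← hξ a]
    exact mul_div_cancel_left₀ _ (ne_of_gt ha)
  have hξsub : Tendsto (fun a => ξ a - u a) l (nhds 0) := by
    refine squeeze_zero_norm (fun a => ?_) (by simpa using hsub.abs)
    exact abs_sub_left_of_mem_uIcc (hξmem a)
  have hratio : Tendsto (fun a => u a / ξ a) l (nhds 1) := by
    have := (hξsub.div_atTop hξtop).const_sub 1
    rw [sub_zero] at this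
    refine this.congr' ?_
    filter_upwards [hξtop.eventually_gt_atTop 0] with a ha
    field_simp
    ring
  have h := (hd.div (hF'.comp hξtop) hc.ne').mul hratio
  rw [mul_one] at h
  refine h.congr' ?_
  filter_upwards [hderiv.eventually_gt_atTop 0, hξtop.eventually_gt_atTop 0] with a h1 h2
  have h1' : deriv F (ξ a) ≠ 0 := ne_of_gt h1
  simp only [Pi.div_apply, Function.comp, ← hξ a]
  field_simp

lemma exists_rightInverse_tendsto_atTop {h : ℝ → ℝ} (hmono : StrictMono h) (hcont : Continuous h)
    (htop : Tendsto h atTop atTop) :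
    ∃ g : ℝ → ℝ, (∀ᶠ y in atTop, h (g y) = y) ∧ Tendsto g atTop atTop := by
  have hex : ∀ y, ∃ x, h 0 ≤ y → h x = y := by
    intro y
    by_cases hy : h 0 ≤ y
    · obtain ⟨M, hM⟩ := (htop.eventually_ge_atTop y).exists
      obtain ⟨x, hx⟩ := mem_range_of_exists_le_of_exists_ge hcont ⟨0, hy⟩ ⟨M, hM⟩
      exact ⟨x, fun _ => hx⟩
    · exact ⟨0, fun h => absurd h hy⟩
  choose g hg using hex
  have hinv : ∀ᶠ y in atTop, h (g y) = y := (eventually_ge_atTop (h 0)).mono hg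
  refine ⟨g, hinv, tendsto_atTop.2 fun M => ?_⟩
  filter_upwards [hinv, eventually_ge_atTop (h M)] with y h1 h2
  exact hmono.le_iff_le.1 (h2.trans_eq h1.symm)

lemma tendsto_deriv_quadratic_add_div_id {f : ℝ → ℝ} (b : ℝ) (hf : Differentiable ℝ f)
    (hf' : Tendsto (fun x => deriv f x / x) atTop (nhds 0)) :
    Tendsto (fun x => deriv (fun x => b * x ^ 2 + f x) x / x) atTop (nhds (2 * b)) := by
  have h := hf'.const_add (2 * b)
  rw [add_zero] at h
  refine h.congr' ?_
  filter_upwards [eventually_gt_atTop 0] with x hx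
  have hd : HasDerivAt (fun x => b * x ^ 2 + f x) (b * (2 * x) + deriv f x) x :=
    (((hasDerivAt_pow 2 x).const_mul b).fun_add (hf x).hasDerivAt).congr_deriv (by norm_num)
  rw [hd.deriv]
  field_simp

lemma tendsto_atTop_of_eventually_eq_exp {h f r : ℝ → ℝ} {b : ℝ} (hb : 0 < b)
    (hf : Differentiable ℝ f) (hf' : Tendsto (fun x => deriv f x / x) atTop (nhds 0))
    (hr : Tendsto r atTop (nhds 0))
    (hrep : ∀ᶠ x in atTop, h x = Real.exp (b * x ^ 2 + f x + r x)) :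
    Tendsto h atTop atTop := by
  have hF : Tendsto (fun x => b * x ^ 2 + f x) atTop atTop :=
    tendsto_atTop_of_tendsto_deriv_atTop (by fun_prop)
      (tendsto_atTop_of_tendsto_deriv_div_id (by positivity)
        (tendsto_deriv_quadratic_add_div_id b hf hf'))
  exact (tendsto_exp_atTop.comp (hF.atTop_add hr)).congr' (hrep.mono fun x hx => hx.symm)

lemma tendsto_quantile_sub_mul {h f r g : ℝ → ℝ} {b : ℝ} (hb : 0 < b)
    (hf : Differentiable ℝ f) (hf' : Tendsto (fun x => deriv f x / x) atTop (nhds 0))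
    (hr : Tendsto r atTop (nhds 0))
    (hrep : ∀ᶠ x in atTop, h x = Real.exp (b * x ^ 2 + f x + r x))
    (hg : ∀ᶠ y in atTop, h (g y) = y) (hgtop : Tendsto g atTop atTop) {l : ℝ} (hl : 0 < l) :
    Tendsto (fun y => (g (l * y) - g y) * g y) atTop (nhds (log l / (2 * b))) := by
  have hly : Tendsto (fun y : ℝ => l * y) atTop atTop := tendsto_id.const_mul_atTop hl
  have hlog : ∀ᶠ y in atTop, log y = b * g y ^ 2 + f (g y) + r (g y) := by
    filter_upwards [hg, hgtop.eventually hrep] with y h1 h2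
    rw [← log_exp (b * g y ^ 2 + f (g y) + r (g y)), ← h2, h1]
  refine tendsto_sub_mul_of_tendsto_sub (F := fun x => b * x ^ 2 + f x) (by fun_prop)
    (by positivity) (tendsto_deriv_quadratic_add_div_id b hf hf') hgtop (hgtop.comp hly) ?_
  have hlim := ((hr.comp hgtop).sub (hr.comp (hgtop.comp hly))).const_add (log l)
  rw [sub_zero, add_zero] at hlim
  refine hlim.congr' ?_
  filter_upwards [hlog, hly.eventually hlog, eventually_gt_atTop 0] with y h1 h2 h3
  rw [log_mul hl.ne' h3.ne'] at h2
  simp only [Function.comp]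
  linarith

/-- If `G` is regularly varying and `A` is squeezed between dilations of `G` up to errors
negligible with respect to `G`, then `A` is asymptotic to `G`. -/
lemma tendsto_div_of_dilation_bounds {A G : ℝ → ℝ} {β : ℝ} (hGpos : ∀ᶠ y in atTop, 0 < G y)
    (hG : ∀ l : ℝ, 0 < l → Tendsto (fun y => G (l * y) / G y) atTop (nhds (l ^ (-β))))
    (hupper : ∀ δ ∈ Ioo (0 : ℝ) 1, ∃ N : ℝ → ℝ, Tendsto (fun y => N y / G y) atTop (nhds 0) ∧
      ∀ᶠ y in atTop, A y ≤ G ((1 - δ) * y) + N y)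
    (hlower : ∀ δ ∈ Ioo (0 : ℝ) 1, ∃ N : ℝ → ℝ, Tendsto (fun y => N y / G y) atTop (nhds 0) ∧
      ∀ᶠ y in atTop, G ((1 + δ) * y) - N y ≤ A y) :
    Tendsto (fun y => A y / G y) atTop (nhds 1) := by
  have hIoo : ∀ᶠ δ in nhdsWithin (0 : ℝ) (Ioi 0), δ ∈ Ioo (0 : ℝ) 1 :=
    Ioo_mem_nhdsGT zero_lt_one
  rw [tendsto_order]
  constructor
  · intro a ha
    have hlim : Tendsto (fun δ : ℝ => (1 + δ) ^ (-β)) (nhdsWithin 0 (Ioi 0)) (nhds 1) := by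
      have : ContinuousAt (fun δ : ℝ => (1 + δ) ^ (-β)) 0 :=
        (by fun_prop : ContinuousAt (fun δ : ℝ => 1 + δ) 0).rpow_const (by simp)
      simpa using this.tendsto.mono_left nhdsWithin_le_nhds
    obtain ⟨δ, hδa, hδ⟩ := ((hlim.eventually_const_lt ha).and hIoo).exists
    obtain ⟨N, hN, hle⟩ := hlower δ hδ
    have h := (hG (1 + δ) (by linarith [hδ.1])).sub hN
    rw [sub_zero] at h
    filter_upwards [hle, hGpos, h.eventually_const_lt hδa] with y h1 h2 h3
    rw [← sub_div] at h3
    exact h3.trans_le (div_le_div_of_nonneg_right h1 h2.le)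
  · intro a ha
    have hlim : Tendsto (fun δ : ℝ => (1 - δ) ^ (-β)) (nhdsWithin 0 (Ioi 0)) (nhds 1) := by
      have : ContinuousAt (fun δ : ℝ => (1 - δ) ^ (-β)) 0 :=
        (by fun_prop : ContinuousAt (fun δ : ℝ => 1 - δ) 0).rpow_const (by simp)
      simpa using this.tendsto.mono_left nhdsWithin_le_nhds
    obtain ⟨δ, hδa, hδ⟩ := ((hlim.eventually_lt_const ha).and hIoo).exists
    obtain ⟨N, hN, hle⟩ := hupper δ hδ
    have h := (hG (1 - δ) (by linarith [hδ.2])).add hN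
    rw [add_zero] at h
    filter_upwards [hle, hGpos, h.eventually_lt_const hδa] with y h1 h2 h3
    rw [← add_div] at h3
    exact (div_le_div_of_nonneg_right h1 h2.le).trans_lt h3

lemma tendsto_dilation_div_of_asymptotic {A G : ℝ → ℝ} {l c : ℝ} (hl : 0 < l)
    (hGpos : ∀ᶠ y in atTop, 0 < G y)
    (hA : Tendsto (fun y => A y / G y) atTop (nhds 1))
    (hG : Tendsto (fun y => G (l * y) / G y) atTop (nhds c)) :
    Tendsto (fun y => A (l * y) / A y) atTop (nhds c) := by
  have hly : Tendsto (fun y : ℝ => l * y) atTop atTop := tendsto_id.const_mul_atTop hl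
  have h := ((hA.comp hly).mul hG).div hA one_ne_zero
  rw [one_mul, div_one] at h
  refine h.congr' ?_
  filter_upwards [hGpos, hly.eventually hGpos, hA.eventually_const_lt zero_lt_one] with y h1 h2 h3
  have h4 : A y ≠ 0 := by
    rintro h0
    simp [h0] at h3
  simp only [Pi.div_apply, Function.comp]
  field_simp

/-- A left tail that is small with respect to the right tail of `h` is negligible. -/
lemma tendsto_left_tail_div {Ω : Type*} [MeasurableSpace Ω] {μ : Measure Ω} [IsFiniteMeasure μ]
    {X : Ω → ℝ} {h G : ℝ → ℝ} {β δ : ℝ} (hβ : 0 < β) (hδ : 0 < δ) (hmono : StrictMono h)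
    (htop : Tendsto h atTop atTop) (hsmall : Tendsto (fun x => h (-x) / h x) atTop (nhds 0))
    (hGpos : ∀ᶠ y in atTop, 0 < G y)
    (hG : ∀ l : ℝ, 0 < l → Tendsto (fun y => G (l * y) / G y) atTop (nhds (l ^ (-β))))
    (hGX : ∀ᶠ y in atTop, μ.real {ω | y < h (-X ω)} = G y) :
    Tendsto (fun y => μ.real {ω | δ * y < -h (X ω)} / G y) atTop (nhds 0) := by
  rw [tendsto_order]
  constructor
  · intro a ha
    filter_upwards [hGpos] with y hy
    exact ha.trans_le (div_nonneg measureReal_nonneg hy.le)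
  intro a ha
  obtain ⟨K, hKa, hK⟩ :=
    (((tendsto_rpow_neg_atTop hβ).eventually_lt_const ha).and (eventually_gt_atTop 0)).exists
  have hε : -(δ / K) < 0 := by
    rw [neg_lt_zero]
    positivity
  obtain ⟨x₀, hx₀⟩ := eventually_atTop.1
    ((hsmall.eventually_const_lt hε).and (htop.eventually_gt_atTop 0))
  have hKy : Tendsto (fun y : ℝ => K * y) atTop atTop := tendsto_id.const_mul_atTop hK
  have hδy : Tendsto (fun y : ℝ => δ * y) atTop atTop := tendsto_id.const_mul_atTop hδ
  filter_upwards [hGpos, hKy.eventually hGX, hδy.eventually_ge_atTop (-h (-x₀)),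
    (hG K hK).eventually_lt_const hKa] with y h1 h2 h3 h4
  refine lt_of_le_of_lt (div_le_div_of_nonneg_right ?_ h1.le) h4
  rw [← h2]
  refine measureReal_mono fun ω hω => ?_
  rw [mem_ofPred_eq] at hω ⊢
  by_cases hx : x₀ ≤ -X ω
  · obtain ⟨h5, h6⟩ := hx₀ _ hx
    rw [neg_neg, lt_div_iff₀ h6] at h5
    have h7 : δ * y < δ / K * h (-X ω) := by linarith
    have h8 : δ * (K * y) < δ * h (-X ω) := by
      calc δ * (K * y) = K * (δ * y) := by ring
        _ < K * (δ / K * h (-X ω)) := by gcongr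
        _ = δ * h (-X ω) := by field_simp
    exact lt_of_mul_lt_mul_left h8 hδ.le
  · have := hmono (show -x₀ < X ω by linarith)
    linarith

/-- For a centred bivariate Gaussian pair `(X_s, X_t)` with common
variance `σ²` and correlation `ρ ∈ (0,1)` (built from independent standard Gaussians
`Z₁, Z₂`), if `h` is strictly increasing, continuous, satisfies [A₊] with parameter
`b > 0` and `h(-x)/h(x) → 0` as `x → ∞`, then
`P(h(X_t) - h(X_s) > y) / P(h(X_t) > y) → 1`; in particular the right tail of the
increment is regularly varying with the same index `-β₊ = -1/(2bσ²)` as that of `h(X_t)`. -/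
theorem increment_right_tail_asymptotics
    {Ω : Type*} [MeasurableSpace Ω] (μ : Measure Ω) [IsProbabilityMeasure μ]
    (σ ρ : ℝ) (hσ : 0 < σ) (hρ : ρ ∈ Set.Ioo (0 : ℝ) 1)
    (Z₁ Z₂ : Ω → ℝ) (hZ₁meas : Measurable Z₁) (hZ₂meas : Measurable Z₂)
    (hZ₁law : μ.map Z₁ = gaussianReal 0 1) (hZ₂law : μ.map Z₂ = gaussianReal 0 1)
    (hindep : IndepFun Z₁ Z₂ μ)
    (Xs Xt : Ω → ℝ)
    (hXs : Xs = fun ω => σ * Z₁ ω)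
    (hXt : Xt = fun ω => σ * (ρ * Z₁ ω + Real.sqrt (1 - ρ ^ 2) * Z₂ ω))
    (h : ℝ → ℝ) (hmono : StrictMono h) (hcont : Continuous h)
    (b : ℝ) (hb : 0 < b)
    (f r : ℝ → ℝ)
    (hf : Differentiable ℝ f)
    (hf' : Tendsto (fun x => deriv f x / x) atTop (nhds 0))
    (hr : Tendsto r atTop (nhds 0))
    (hrep : ∀ᶠ x in atTop, h x = Real.exp (b * x ^ 2 + f x + r x))
    (hsmall : Tendsto (fun x => h (-x) / h x) atTop (nhds 0)) :
    Tendsto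
      (fun y => (μ {ω | h (Xt ω) - h (Xs ω) > y}).toReal / (μ {ω | h (Xt ω) > y}).toReal)
      atTop (nhds 1) ∧
    ∀ l : ℝ, 0 < l →
      Tendsto
        (fun y =>
          (μ {ω | h (Xt ω) - h (Xs ω) > l * y}).toReal /
            (μ {ω | h (Xt ω) - h (Xs ω) > y}).toReal)
        atTop (nhds (l ^ (-(1 / (2 * b * σ ^ 2))))) := by
  obtain ⟨hρ0, hρ1⟩ := hρ
  have hρsq : 0 < 1 - ρ ^ 2 := by nlinarith
  set β : ℝ := 1 / (2 * b * σ ^ 2) with hβdef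
  have hβ : 0 < β := by positivity
  have htop := tendsto_atTop_of_eventually_eq_exp hb hf hf' hr hrep
  obtain ⟨g, hg, hgtop⟩ := exists_rightInverse_tendsto_atTop hmono hcont htop
  have hmul : ∀ {l : ℝ}, 0 < l → Tendsto (fun y : ℝ => l * y) atTop atTop :=
    fun hl => tendsto_id.const_mul_atTop hl
  have hlin : ∀ {p q s : ℝ}, 0 < s → p ^ 2 + q ^ 2 = s ^ 2 → ∀ v : ℝ,
      μ.real {ω | v < p * Z₁ ω + q * Z₂ ω} = stdGaussianTail (v / s) :=
    measureReal_lt_linear_combination hZ₁meas hZ₂meas hZ₁law hZ₂law hindep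
  have hlt : ∀ᶠ y in atTop, ∀ x, y < h x ↔ g y < x := by
    filter_upwards [hg] with y hy x
    conv_lhs => rw [← hy]
    exact hmono.lt_iff_lt
  set A : ℝ → ℝ := fun y => μ.real {ω | h (Xt ω) - h (Xs ω) > y}
  set G : ℝ → ℝ := fun y => μ.real {ω | h (Xt ω) > y} with hGdef
  have hGeq : ∀ᶠ y in atTop, G y = stdGaussianTail (g y / σ) := by
    filter_upwards [hlt] with y hy
    rw [← hlin (p := σ * ρ) (q := σ * √(1 - ρ ^ 2)) hσ
      (by rw [mul_pow, mul_pow, sq_sqrt hρsq.le]; ring)]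
    simp only [hGdef, gt_iff_lt, hy, hXt, mul_add, mul_assoc]
  have hGneg : ∀ᶠ y in atTop, μ.real {ω | y < h (-Xs ω)} = G y := by
    filter_upwards [hlt, hGeq] with y hy hGy
    rw [hGy, ← hlin (p := -σ) (q := 0) hσ (by ring)]
    simp [hy, hXs]
  have hvtop : Tendsto (fun y => g y / σ) atTop atTop := hgtop.atTop_div_const hσ
  have hGpos : ∀ᶠ y in atTop, 0 < G y := by
    filter_upwards [hGeq, hvtop.eventually_gt_atTop 0] with y h1 h2
    rw [h1]
    exact stdGaussianTail_pos h2
  have hquant : ∀ {l : ℝ}, 0 < l →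
      Tendsto (fun y => (g (l * y) - g y) * g y) atTop (nhds (log l / (2 * b))) :=
    tendsto_quantile_sub_mul hb hf hf' hr hrep hg hgtop
  have hGrv : ∀ l : ℝ, 0 < l → Tendsto (fun y => G (l * y) / G y) atTop (nhds (l ^ (-β))) := by
    intro l hl
    have hlim : Tendsto (fun y => (g (l * y) / σ - g y / σ) * (g y / σ)) atTop
        (nhds (log l / (2 * b) / σ ^ 2)) := by
      refine ((hquant hl).div_const (σ ^ 2)).congr fun y => ?_
      field_simp
    have h1 := tendsto_stdGaussianTail_div_of_sub_mul hvtop hlim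
    have h2 : exp (-(log l / (2 * b) / σ ^ 2)) = l ^ (-β) := by
      rw [rpow_def_of_pos hl, hβdef]
      congr 1
      field_simp
    rw [h2] at h1
    refine h1.congr' ?_
    filter_upwards [hGeq, (hmul hl).eventually hGeq] with y h3 h4
    rw [h3, h4]
  have hratio : ∀ {l : ℝ}, 0 < l → Tendsto (fun y => g (l * y) / g y) atTop (nhds 1) := by
    intro l hl
    have h1 := ((hquant hl).div_atTop (hgtop.atTop_mul_atTop₀ hgtop)).const_add 1
    rw [add_zero] at h1
    refine h1.congr' ?_
    filter_upwards [hgtop.eventually_gt_atTop 0] with y hy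
    field_simp
    ring
  have hAG : Tendsto (fun y => A y / G y) atTop (nhds 1) := by
    refine tendsto_div_of_dilation_bounds hGpos hGrv (fun δ hδ => ?_) (fun δ hδ => ?_)
    · refine ⟨_, tendsto_left_tail_div hβ hδ.1 hmono htop hsmall hGpos hGrv hGneg,
        Eventually.of_forall fun y => ?_⟩
      refine le_trans (measureReal_mono fun ω hω => ?_) (measureReal_union_le _ _)
      rw [mem_ofPred_eq] at hω
      by_contra hcon
      simp only [mem_union, mem_ofPred_eq, not_or, not_lt, gt_iff_lt] at hcon
      linarith [hcon.1, hcon.2]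
    · have hδ1 : 0 < 1 + δ := by linarith [hδ.1]
      set s : ℝ := √(2 * (1 + ρ))
      have hs0 : 0 < s := sqrt_pos.2 (by linarith)
      have hssq : s ^ 2 = 2 * (1 + ρ) := sq_sqrt (by linarith)
      have hs2 : 1 < 2 / s := by
        rw [one_lt_div hs0]
        nlinarith
      refine ⟨fun y => stdGaussianTail ((g ((1 + δ) * y) + g (δ * y)) / σ / s), ?_, ?_⟩
      · have hlim : Tendsto (fun y => (g ((1 + δ) * y) + g (δ * y)) / σ / s / (g y / σ)) atTop
            (nhds (2 / s)) := by
          have h1 := ((hratio hδ1).add (hratio hδ.1)).div_const s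
          rw [one_add_one_eq_two] at h1
          refine h1.congr' ?_
          filter_upwards [hgtop.eventually_gt_atTop 0] with y hy
          field_simp
        refine (tendsto_stdGaussianTail_div_of_one_lt hs2 hvtop hlim).congr' ?_
        filter_upwards [hGeq] with y hy
        rw [hy]
      · filter_upwards [(hmul hδ1).eventually hlt, (hmul hδ.1).eventually hlt] with y h1 h2
        rw [← hlin (p := 1 + ρ) (q := √(1 - ρ ^ 2)) hs0 (by rw [hssq, sq_sqrt hρsq.le]; ring),
          sub_le_iff_le_add]
        refine le_trans (measureReal_mono fun ω hω => ?_) (measureReal_union_le _ _)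
        by_cases hω2 : δ * y < h (Xs ω)
        · right
          have h3 := (h1 _).1 hω
          have h4 := (h2 _).1 hω2
          rw [hXt] at h3
          rw [hXs] at h4
          rw [mem_ofPred_eq, div_lt_iff₀ hσ]
          linarith
        · left
          rw [mem_ofPred_eq] at hω ⊢
          linarith
  exact ⟨hAG, fun l hl => tendsto_dilation_div_of_asymptotic hl hGpos hAG (hGrv l hl)⟩
end

section
/- Let U, V, ξ, η be real random variables on a common probability space such that U, V, U₁ := U + ξ and V₁ := V + η all have continuous distribution functions, and set ε₁ := P(ξ ≠ 0), ε₂ := P(η ≠ 0). Then E[F_{U₁}(U₁) F_{V₁}(V₁)] ≤ E[F_U(U) F_V(V)] + (3/2)(ε₁ + ε₂) + ε₁ ε₂, where F_X denotes the distribution function of X. -/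
open MeasureTheory ProbabilityTheory Filter Set

/-- The distribution function of a real random variable `X` on `(Ω, μ)`. -/
noncomputable def distFun {Ω : Type*} [MeasurableSpace Ω] (μ : Measure Ω)
    (X : Ω → ℝ) : ℝ → ℝ := fun x => (μ {ω | X ω ≤ x}).toReal

section DistFun

variable {Ω : Type*} [MeasurableSpace Ω] {μ : Measure Ω} {X Y : Ω → ℝ}

lemma distFun_nonneg (x : ℝ) : 0 ≤ distFun μ X x := ENNReal.toReal_nonneg

lemma distFun_le_one [IsProbabilityMeasure μ] (x : ℝ) : distFun μ X x ≤ 1 :=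
  measureReal_le_one

lemma distFun_eq_map_real_Iic (hX : Measurable X) (x : ℝ) :
    distFun μ X x = ((μ.map X) (Iic x)).toReal := by
  rw [Measure.map_apply hX measurableSet_Iic]
  rfl

lemma distFun_eq_cdf_map [IsProbabilityMeasure μ] (hX : Measurable X) :
    distFun μ X = cdf (μ.map X) := by
  have := Measure.isProbabilityMeasure_map (μ := μ) hX.aemeasurable
  ext x
  rw [distFun_eq_map_real_Iic hX, cdf_eq_real, measureReal_def]

/-- A random variable with continuous distribution function has an atomless law. -/
lemma nullSingletonClass_map_of_continuous_distFun [IsProbabilityMeasure μ] (hX : Measurable X)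
    (hc : Continuous (distFun μ X)) : NullSingletonClass (μ.map X) := by
  have := Measure.isProbabilityMeasure_map (μ := μ) hX.aemeasurable
  rw [distFun_eq_cdf_map hX] at hc
  refine ⟨fun x => ?_⟩
  rw [← measure_cdf (μ.map X), StieltjesFunction.measure_singleton,
    hc.continuousAt.continuousWithinAt.leftLim_eq]
  simp

/-- For an atomless probability measure on `ℝ`, the mean of its distribution function is `1/2`. -/
lemma integral_measure_Iic_eq_half (ν : Measure ℝ) [IsProbabilityMeasure ν] [NullSingletonClass ν] :
    ∫ x, (ν (Iic x)).toReal ∂ν = 1 / 2 := by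
  have hs : MeasurableSet {p : ℝ × ℝ | p.2 ≤ p.1} :=
    measurableSet_le measurable_snd measurable_fst
  have hIic : Measurable fun x => ν (Iic x) := measurable_measure_prodMk_left hs
  have hswap : ∫⁻ x, ν (Iic x) ∂ν = ∫⁻ x, ν (Ici x) ∂ν :=
    (Measure.prod_apply (μ := ν) (ν := ν) hs).symm.trans (Measure.prod_apply_symm hs)
  have hsum : ∫⁻ x, ν (Iic x) ∂ν + ∫⁻ x, ν (Iic x) ∂ν = 1 := by
    nth_rewrite 2 [hswap]
    rw [← lintegral_add_left hIic]
    have hone (x : ℝ) : ν (Iic x) + ν (Ici x) = 1 := by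
      rw [← measure_congr (Ioi_ae_eq_Ici (μ := ν) (a := x)), ← compl_Iic,
        prob_add_prob_compl measurableSet_Iic]
    simp [hone]
  rw [integral_toReal hIic.aemeasurable (ae_of_all _ fun x => measure_lt_top ν _)]
  have hfin : ∫⁻ x, ν (Iic x) ∂ν ≠ ⊤ := fun h => by simp [h] at hsum
  have := congrArg ENNReal.toReal hsum
  rw [ENNReal.toReal_add hfin hfin, ENNReal.toReal_one] at this
  linarith

lemma integral_distFun_comp_self [IsProbabilityMeasure μ] (hX : Measurable X)
    (hc : Continuous (distFun μ X)) : ∫ ω, distFun μ X (X ω) ∂μ = 1 / 2 := by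
  have := Measure.isProbabilityMeasure_map (μ := μ) hX.aemeasurable
  have := nullSingletonClass_map_of_continuous_distFun hX hc
  rw [← integral_map hX.aemeasurable hc.aestronglyMeasurable, funext (distFun_eq_map_real_Iic hX),
    integral_measure_Iic_eq_half]

lemma integrable_distFun_comp [IsProbabilityMeasure μ] (hc : Continuous (distFun μ X))
    (hY : Measurable Y) : Integrable (fun ω => distFun μ X (Y ω)) μ :=
  Integrable.of_bound (hc.measurable.comp hY).aestronglyMeasurable 1 <| ae_of_all _ fun _ => by
    rw [Real.norm_of_nonneg (distFun_nonneg _)]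
    exact distFun_le_one _

lemma integrable_distFun_comp_mul [IsProbabilityMeasure μ] (hX : Measurable X) (hY : Measurable Y)
    (hXc : Continuous (distFun μ X)) (hYc : Continuous (distFun μ Y)) :
    Integrable (fun ω => distFun μ X (X ω) * distFun μ Y (Y ω)) μ :=
  (integrable_distFun_comp hYc hY).bdd_mul (c := 1)
    (hXc.measurable.comp hX).aestronglyMeasurable <| ae_of_all _ fun _ => by
      rw [Real.norm_of_nonneg (distFun_nonneg _)]
      exact distFun_le_one _

/-- Perturbing `X` by `ζ` raises its distribution function by at most `P(ζ ≠ 0)`. -/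
lemma distFun_add_le [IsProbabilityMeasure μ] (X ζ : Ω → ℝ) (x : ℝ) :
    distFun μ (X + ζ) x ≤ distFun μ X x + (μ {ω | ζ ω ≠ 0}).toReal := by
  refine (measureReal_mono (μ := μ) (s₂ := {ω | X ω ≤ x} ∪ {ω | ζ ω ≠ 0}) fun ω hω => ?_).trans
    (measureReal_union_le _ _)
  by_cases h : ζ ω = 0
  · left
    simpa [h] using hω
  · exact Or.inr h

lemma distFun_add_comp_le [IsProbabilityMeasure μ] (X ζ : Ω → ℝ) (ω : Ω) {c : ℝ} (hc₀ : 0 ≤ c)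
    (hc₁ : c ≤ 1) :
    distFun μ (X + ζ) (X ω + ζ ω) * c ≤ distFun μ X (X ω) * c +
      (μ {ω | ζ ω ≠ 0}).toReal * c + {ω | ζ ω ≠ 0}.indicator 1 ω := by
  by_cases h : ζ ω = 0
  · have := mul_le_mul_of_nonneg_right (distFun_add_le (μ := μ) X ζ (X ω)) hc₀
    simp only [h, add_zero, mem_ofPred_eq, ne_eq, not_true_eq_false, not_false_eq_true,
      indicator_of_notMem]
    linarith
  · have h₁ := mul_le_one₀ (distFun_le_one (μ := μ) (X := X + ζ) (X ω + ζ ω)) hc₀ hc₁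
    have h₂ := mul_nonneg (distFun_nonneg (μ := μ) (X := X) (X ω)) hc₀
    have h₃ : 0 ≤ (μ {ω | ζ ω ≠ 0}).toReal * c := mul_nonneg ENNReal.toReal_nonneg hc₀
    rw [indicator_of_mem (show ω ∈ {ω | ζ ω ≠ 0} from h), Pi.one_apply]
    linarith

end DistFun

/-- If `U`, `V`, `U₁ = U + ξ` and `V₁ = V + η` all have continuous
distribution functions, then with `ε₁ = P(ξ ≠ 0)`, `ε₂ = P(η ≠ 0)`,
`E[F_{U₁}(U₁) F_{V₁}(V₁)] ≤ E[F_U(U) F_V(V)] + (3/2)(ε₁ + ε₂) + ε₁ ε₂`. -/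
theorem expectation_distFun_product_perturbation_bound
    {Ω : Type*} [MeasurableSpace Ω] (μ : Measure Ω) [IsProbabilityMeasure μ]
    (U V ξ η : Ω → ℝ)
    (hU : Measurable U) (hV : Measurable V) (hξ : Measurable ξ) (hη : Measurable η)
    (hUc : Continuous (distFun μ U)) (hVc : Continuous (distFun μ V))
    (hU₁c : Continuous (distFun μ (U + ξ))) (hV₁c : Continuous (distFun μ (V + η))) :
    (∫ ω, distFun μ (U + ξ) (U ω + ξ ω) * distFun μ (V + η) (V ω + η ω) ∂μ) ≤
      (∫ ω, distFun μ U (U ω) * distFun μ V (V ω) ∂μ) +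
        3 / 2 * ((μ {ω | ξ ω ≠ 0}).toReal + (μ {ω | η ω ≠ 0}).toReal) +
          (μ {ω | ξ ω ≠ 0}).toReal * (μ {ω | η ω ≠ 0}).toReal := by
  have hU₁ : Measurable (U + ξ) := hU.add hξ
  have hV₁ : Measurable (V + η) := hV.add hη
  have hsξ : MeasurableSet {ω | ξ ω ≠ 0} := (measurableSet_eq_fun hξ measurable_const).compl
  have hsη : MeasurableSet {ω | η ω ≠ 0} := (measurableSet_eq_fun hη measurable_const).compl
  set ε₁ := (μ {ω | ξ ω ≠ 0}).toReal with hε₁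
  set ε₂ := (μ {ω | η ω ≠ 0}).toReal with hε₂
  have hε : 0 ≤ ε₁ * ε₂ := mul_nonneg ENNReal.toReal_nonneg ENNReal.toReal_nonneg
  have iUV := integrable_distFun_comp_mul hU hV hUc hVc
  have iV₁ := (integrable_distFun_comp hV₁c hV₁).const_mul ε₁
  have iU := (integrable_distFun_comp hUc hU).const_mul ε₂
  have iξ : Integrable ({ω | ξ ω ≠ 0}.indicator (1 : Ω → ℝ)) μ :=
    (integrable_const (1 : ℝ)).indicator hsξ
  have iη : Integrable ({ω | η ω ≠ 0}.indicator (1 : Ω → ℝ)) μ :=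
    (integrable_const (1 : ℝ)).indicator hsη
  have hle : ∀ ω, distFun μ (U + ξ) (U ω + ξ ω) * distFun μ (V + η) (V ω + η ω) ≤
      distFun μ U (U ω) * distFun μ V (V ω) + ε₁ * distFun μ (V + η) ((V + η) ω) +
        ε₂ * distFun μ U (U ω) + {ω | ξ ω ≠ 0}.indicator 1 ω + {ω | η ω ≠ 0}.indicator 1 ω := by
    intro ω
    have h₁ := distFun_add_comp_le (μ := μ) U ξ ω
      (distFun_nonneg (μ := μ) (X := V + η) (V ω + η ω)) (distFun_le_one _)
    have h₂ := distFun_add_comp_le (μ := μ) V η ω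
      (distFun_nonneg (μ := μ) (X := U) (U ω)) (distFun_le_one _)
    rw [Pi.add_apply V η ω]
    linarith
  have key := integral_mono (integrable_distFun_comp_mul hU₁ hV₁ hU₁c hV₁c)
    ((((iUV.add iV₁).add iU).add iξ).add iη) hle
  rw [integral_add' (((iUV.add iV₁).add iU).add iξ) iη, integral_add' ((iUV.add iV₁).add iU) iξ,
    integral_add' (iUV.add iV₁) iU, integral_add' iUV iV₁, integral_const_mul, integral_const_mul,
    integral_distFun_comp_self hV₁ hV₁c, integral_distFun_comp_self hU hUc,
    integral_indicator_one hsξ, integral_indicator_one hsη, measureReal_def, measureReal_def,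
    ← hε₁, ← hε₂] at key
  simp only [Pi.add_apply U, Pi.add_apply V] at key
  linarith
end
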